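/- arXiv:2603.09174 — 3 statements merged into one kernel-verified Lean document; each statement's English description precedes it below -/
import Mathlib

section
/- Let t₀ < T, let v : ℝ × ℝ → ℝ be such that v and ∂_ρ̂ v are continuous on ℝ × [t₀, T], and let p : ℝ × ℝ → ℝ be C¹ on ℝ × [t₀, T] with p > 0, satisfying ∂_t p + ∂_ρ̂(v·p) = 0 on ℝ × (t₀, T). Let Φ : ℝ × ℝ → ℝ satisfy: Φ(t₀, y) = y for all y; for each y, t ↦ Φ(t, y) is differentiable with ∂_t Φ(t, y) = v(Φ(t, y), t); for each t ∈ [t₀, T], y ↦ Φ(t, y) is a bijection of ℝ that is differentiable with ∂_y Φ(t, y) > 0 and ∂_y Φ continuous; and for each y, t ↦ ∂_y Φ(t, y) is differentiable with ∂_t(∂_y Φ)(t, y) = (∂_ρ̂ v)(Φ(t, y), t)·∂_y Φ(t, y). Then for every continuous compactly supported g : ℝ → ℝ and every t ∈ [t₀, T], ∫_ℝ g(Φ(t, y))·p(y, t₀) dy = ∫_ℝ g(z)·p(z, t) dz. -/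
/-!
Along a characteristic, the Lagrangian density `τ ↦ p(Φ(τ,y),τ) · ∂_yΦ(τ,y)` is constant: its
derivative is `(∂_t p + v ∂_x p + p ∂_x v) · ∂_yΦ`, which vanishes by the continuity equation
(`hasDerivAt_lagrangian_density`). Its value at `t₀` is `p(y,t₀)`, so
`p(y,t₀) = p(Φ(t,y),t) · ∂_yΦ(t,y)`, and the claim is the change of variables `z = Φ(t,y)`.
-/

open Real Set MeasureTheory

/-- The product rule along a characteristic `φ` with Jacobian `J`. The two slice derivatives in
the continuity equation are genuine derivatives because `p` is differentiable at the point. -/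
lemma hasDerivAt_lagrangian_density {v : ℝ → ℝ → ℝ} {p : ℝ × ℝ → ℝ} {φ J : ℝ → ℝ} {s d : ℝ}
    (hp : DifferentiableAt ℝ p (φ s, s))
    (hv : HasDerivAt (fun x => v x s) d (φ s))
    (hcont : deriv (fun τ => p (φ s, τ)) s + deriv (fun x => v x s * p (x, s)) (φ s) = 0)
    (hφ : HasDerivAt φ (v (φ s) s) s) (hJ : HasDerivAt J (d * J s) s) :
    HasDerivAt (fun τ => p (φ τ, τ) * J τ) 0 s := by
  have hL := hp.hasFDerivAt
  set L := fderiv ℝ p (φ s, s)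
  have h_time : HasDerivAt (fun τ => p (φ s, τ)) (L (0, 1)) s :=
    HasFDerivAt.comp_hasDerivAt s hL ((hasDerivAt_const s (φ s)).prodMk (hasDerivAt_id s))
  have h_space : HasDerivAt (fun x => p (x, s)) (L (1, 0)) (φ s) :=
    HasFDerivAt.comp_hasDerivAt (f := fun x : ℝ => (x, s)) (φ s) hL
      ((hasDerivAt_id (φ s)).prodMk (hasDerivAt_const (φ s) s))
  have h_char : HasDerivAt (fun τ => p (φ τ, τ)) (L (v (φ s) s, 1)) s :=
    HasFDerivAt.comp_hasDerivAt (f := fun τ : ℝ => (φ τ, τ)) s hL (hφ.prodMk (hasDerivAt_id s))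
  have h_split : L (v (φ s) s, 1) = v (φ s) s * L (1, 0) + L (0, 1) := by
    rw [← smul_eq_mul, ← map_smul, ← map_add]
    simp
  rw [h_time.deriv, (hv.fun_mul h_space).deriv] at hcont
  refine (h_char.mul hJ).congr_deriv ?_
  rw [h_split]
  linear_combination J s * hcont

/-- The flow map `Φ` of the probability flow ODE transports the density
`p(·,t₀)` forward to `p(·,t)`: for every continuous compactly supported `g`,
`∫ g(Φ(t,y)) p(y,t₀) dy = ∫ g(z) p(z,t) dz`. -/
theorem flow_transports_density
    (t₀ T : ℝ) (ht : t₀ < T)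
    (v : ℝ → ℝ → ℝ) (dv : ℝ × ℝ → ℝ)
    (hdv : ∀ r : ℝ, ∀ t ∈ Icc t₀ T, HasDerivAt (fun x => v x t) (dv (r, t)) r)
    (hv_cont : ContinuousOn (fun z : ℝ × ℝ => v z.1 z.2)
      ((univ : Set ℝ) ×ˢ Icc t₀ T))
    (hdv_cont : ContinuousOn dv ((univ : Set ℝ) ×ˢ Icc t₀ T))
    (p : ℝ × ℝ → ℝ)
    (hp : ContDiffOn ℝ 1 p ((univ : Set ℝ) ×ˢ Icc t₀ T))
    (hppos : ∀ z ∈ (univ : Set ℝ) ×ˢ Icc t₀ T, 0 < p z)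
    (hcontinuity : ∀ r : ℝ, ∀ t ∈ Ioo t₀ T,
      deriv (fun τ => p (r, τ)) t + deriv (fun x => v x t * p (x, t)) r = 0)
    (Φ : ℝ × ℝ → ℝ) (DΦ : ℝ × ℝ → ℝ)
    (hΦ0 : ∀ y : ℝ, Φ (t₀, y) = y)
    (hΦode : ∀ y : ℝ, ∀ t ∈ Icc t₀ T,
      HasDerivAt (fun τ => Φ (τ, y)) (v (Φ (t, y)) t) t)
    (hΦbij : ∀ t ∈ Icc t₀ T, Function.Bijective (fun y => Φ (t, y)))
    (hDΦ : ∀ t ∈ Icc t₀ T, ∀ y : ℝ,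
      HasDerivAt (fun y' => Φ (t, y')) (DΦ (t, y)) y)
    (hDΦpos : ∀ t ∈ Icc t₀ T, ∀ y : ℝ, 0 < DΦ (t, y))
    (hDΦcont : ContinuousOn DΦ (Icc t₀ T ×ˢ (univ : Set ℝ)))
    (hJacobi : ∀ y : ℝ, ∀ t ∈ Icc t₀ T,
      HasDerivAt (fun τ => DΦ (τ, y)) (dv (Φ (t, y), t) * DΦ (t, y)) t) :
    ∀ g : ℝ → ℝ, Continuous g → HasCompactSupport g →
      ∀ t ∈ Icc t₀ T,
        ∫ y : ℝ, g (Φ (t, y)) * p (y, t₀) = ∫ z : ℝ, g z * p (z, t) := by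
  intro g _ _ t htm
  have ht₀ : t₀ ∈ Icc t₀ T := left_mem_Icc.2 ht.le
  have hDΦ0 : ∀ y, DΦ (t₀, y) = 1 := fun y =>
    (hDΦ t₀ ht₀ y).unique (by simpa only [hΦ0] using hasDerivAt_id' y)
  have hkey : ∀ y, p (y, t₀) = p (Φ (t, y), t) * DΦ (t, y) := by
    intro y
    rcases htm.1.eq_or_lt with rfl | hlt
    · rw [hDΦ0, hΦ0, mul_one]
    have hsub : Icc t₀ t ⊆ Icc t₀ T := Icc_subset_Icc_right htm.2
    have hq_cont : ContinuousOn (fun τ => p (Φ (τ, y), τ) * DΦ (τ, y)) (Icc t₀ t) := by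
      have hΦ_cont : ContinuousOn (fun τ => Φ (τ, y)) (Icc t₀ t) := fun τ hτ =>
        (hΦode y τ (hsub hτ)).continuousAt.continuousWithinAt
      have hDΦ_cont : ContinuousOn (fun τ => DΦ (τ, y)) (Icc t₀ t) := fun τ hτ =>
        (hJacobi y τ (hsub hτ)).continuousAt.continuousWithinAt
      exact (hp.continuousOn.comp (hΦ_cont.prodMk continuousOn_id)
        fun τ hτ => ⟨mem_univ _, hsub hτ⟩).mul hDΦ_cont
    -- The equation holds only at interior times, so constancy comes from the mean value theorem.
    obtain ⟨c, hc, hslope⟩ := exists_hasDerivAt_eq_slope _ (fun _ => (0 : ℝ)) hlt hq_cont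
      fun s hs => by
        have hs' : s ∈ Ioo t₀ T := ⟨hs.1, hs.2.trans_le htm.2⟩
        have hsI : s ∈ Icc t₀ T := Ioo_subset_Icc_self hs'
        exact hasDerivAt_lagrangian_density (φ := fun τ => Φ (τ, y))
          ((hp.differentiableOn one_ne_zero).differentiableAt
            (prod_mem_nhds Filter.univ_mem (Icc_mem_nhds hs'.1 hs'.2)))
          (hdv _ s hsI) (hcontinuity _ s hs') (hΦode y s hsI) (hJacobi y s hsI)
    have hne : t - t₀ ≠ 0 := (sub_pos.2 hlt).ne'
    rw [eq_comm, div_eq_zero_iff, or_iff_left hne, sub_eq_zero] at hslope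
    simpa only [hDΦ0, hΦ0, mul_one] using hslope.symm
  have hcov := integral_image_eq_integral_abs_deriv_smul MeasurableSet.univ
    (fun y _ => (hDΦ t htm y).hasDerivWithinAt) (hΦbij t htm).injective.injOn
    (fun z => g z * p (z, t))
  rw [image_univ, (hΦbij t htm).surjective.range_eq, setIntegral_univ, setIntegral_univ] at hcov
  rw [hcov]
  refine integral_congr_ae (Filter.Eventually.of_forall fun y => ?_)
  simp only [abs_of_pos (hDΦpos t htm y), smul_eq_mul, hkey y]
  ring
end

section
/- Let U ⊂ ℝ² be open, let v : ℝ × ℝ → ℝ be C² in its first argument with v, ∂_ρ̂ v, ∂²_ρ̂ v continuous on U, and let p : ℝ × ℝ → ℝ be C² on U with p > 0 on U, satisfying the continuity equation ∂_t p + ∂_ρ̂(v·p) = 0 on U. Define the score s(ρ̂,t) = ∂_ρ̂ log p(ρ̂,t). Then for all (ρ̂, t) ∈ U, ∂_t s(ρ̂,t) + v(ρ̂,t)·∂_ρ̂ s(ρ̂,t) + (∂_ρ̂ v)(ρ̂,t)·s(ρ̂,t) + (∂²_ρ̂ v)(ρ̂,t) = 0. -/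
open Real Set

/-!
With `L = log p`, dividing the continuity equation by `p > 0` gives the transport equation
`∂_t L + v ∂_ρ̂ L + ∂_ρ̂ v = 0` on `U`. Differentiating it in `ρ̂` and commuting the mixed second
partials of the `C²` function `L` yields the residual identity for `s = ∂_ρ̂ L`. All partials of `L`
are expressed through `fderiv ℝ L` applied to `(1, 0)` and `(0, 1)`, so that the symmetry of the
second Fréchet derivative applies.
-/

lemma hasDerivAt_slice_fst {F : Type*} [NormedAddCommGroup F] [NormedSpace ℝ F]
    {f : ℝ × ℝ → F} {f' : ℝ × ℝ →L[ℝ] F} {r t : ℝ} (h : HasFDerivAt f f' (r, t)) :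
    HasDerivAt (fun x => f (x, t)) (f' (1, 0)) r :=
  h.comp_hasDerivAt r ((hasDerivAt_id r).prodMk (hasDerivAt_const r t))

lemma hasDerivAt_slice_snd {F : Type*} [NormedAddCommGroup F] [NormedSpace ℝ F]
    {f : ℝ × ℝ → F} {f' : ℝ × ℝ →L[ℝ] F} {r t : ℝ} (h : HasFDerivAt f f' (r, t)) :
    HasDerivAt (fun τ => f (r, τ)) (f' (0, 1)) t :=
  h.comp_hasDerivAt t ((hasDerivAt_const t r).prodMk (hasDerivAt_id t))

/-- Score-form Fokker–Planck residual identity: the exact score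
`s = ∂_ρ̂ log p` of any positive `C²` solution of the continuity equation
`∂_t p + ∂_ρ̂(v p) = 0` satisfies
`∂_t s + v ∂_ρ̂ s + (∂_ρ̂ v) s + ∂²_ρ̂ v = 0`. -/
theorem score_residual_vanishes
    (U : Set (ℝ × ℝ)) (hU : IsOpen U)
    (v : ℝ → ℝ → ℝ)
    (hv_diff : ∀ z ∈ U, DifferentiableAt ℝ (fun x => v x z.2) z.1)
    (hv_diff2 : ∀ z ∈ U, DifferentiableAt ℝ (deriv (fun x => v x z.2)) z.1)
    (hv_cont : ContinuousOn (fun z : ℝ × ℝ => v z.1 z.2) U)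
    (hdv_cont : ContinuousOn (fun z : ℝ × ℝ => deriv (fun x => v x z.2) z.1) U)
    (hd2v_cont : ContinuousOn
      (fun z : ℝ × ℝ => deriv (deriv (fun x => v x z.2)) z.1) U)
    (p : ℝ × ℝ → ℝ)
    (hp : ContDiffOn ℝ 2 p U)
    (hppos : ∀ z ∈ U, 0 < p z)
    (hcontinuity : ∀ r t : ℝ, (r, t) ∈ U →
      deriv (fun τ => p (r, τ)) t + deriv (fun x => v x t * p (x, t)) r = 0)
    (s : ℝ → ℝ → ℝ)
    (hs : s = fun r t => deriv (fun x => Real.log (p (x, t))) r) :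
    ∀ r t : ℝ, (r, t) ∈ U →
      deriv (fun τ => s r τ) t
        + v r t * deriv (fun x => s x t) r
        + deriv (fun x => v x t) r * s r t
        + deriv (deriv (fun x => v x t)) r = 0 := by
  subst hs
  intro r t hrt
  set L : ℝ × ℝ → ℝ := fun z => Real.log (p z) with hL
  have hLC : ∀ z ∈ U, ContDiffAt ℝ 2 L z := fun z hz =>
    (hp.contDiffAt (hU.mem_nhds hz)).log (hppos z hz).ne'
  have hL1 : ∀ z ∈ U, HasFDerivAt L (fderiv ℝ L z) z := fun z hz =>
    ((hLC z hz).differentiableAt (by norm_num)).hasFDerivAt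
  have hL2 : HasFDerivAt (fderiv ℝ L) (fderiv ℝ (fderiv ℝ L) (r, t)) (r, t) :=
    (((hLC _ hrt).fderiv_right (m := 1) (by norm_num)).differentiableAt
      (by norm_num)).hasFDerivAt
  have hsymm : fderiv ℝ (fderiv ℝ L) (r, t) (0, 1) (1, 0)
      = fderiv ℝ (fderiv ℝ L) (r, t) (1, 0) (0, 1) :=
    (hLC _ hrt).isSymmSndFDerivAt (by simp) (0, 1) (1, 0)
  have hs_eq : ∀ x τ, (x, τ) ∈ U →
      deriv (fun y => Real.log (p (y, τ))) x = fderiv ℝ L (x, τ) (1, 0) := fun x τ hz =>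
    (hasDerivAt_slice_fst (hL1 _ hz)).deriv
  have hUr : ∀ᶠ x in nhds r, (x, t) ∈ U :=
    (Continuous.prodMk_left t).continuousAt.eventually (hU.mem_nhds hrt)
  have hUt : ∀ᶠ τ in nhds t, (r, τ) ∈ U :=
    (Continuous.prodMk_right r).continuousAt.eventually (hU.mem_nhds hrt)
  -- The continuity equation divided by `p`.
  have htransport : ∀ x, (x, t) ∈ U →
      fderiv ℝ L (x, t) (0, 1) + v x t * fderiv ℝ L (x, t) (1, 0)
        + deriv (fun y => v y t) x = 0 := by
    intro x hx
    have hpos := hppos _ hx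
    have hpd : HasFDerivAt p (fderiv ℝ p (x, t)) (x, t) :=
      ((hp.contDiffAt (hU.mem_nhds hx)).differentiableAt (by norm_num)).hasFDerivAt
    have hGL : fderiv ℝ L (x, t) = (p (x, t))⁻¹ • fderiv ℝ p (x, t) :=
      (hpd.log hpos.ne').fderiv
    have hc := hcontinuity x t hx
    have hvp : HasDerivAt (fun y => v y t * p (y, t))
        (deriv (fun y => v y t) x * p (x, t) + v x t * fderiv ℝ p (x, t) (1, 0)) x :=
      (hv_diff _ hx).hasDerivAt.mul (hasDerivAt_slice_fst hpd)
    rw [(hasDerivAt_slice_snd hpd).deriv, hvp.deriv] at hc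
    simp only [hGL, ContinuousLinearMap.smul_apply, smul_eq_mul]
    field_simp
    linarith
  have ht : HasDerivAt (fun τ => deriv (fun y => Real.log (p (y, τ))) r)
      (fderiv ℝ (fderiv ℝ L) (r, t) (0, 1) (1, 0)) t := by
    have h := (hasDerivAt_slice_snd hL2).clm_apply (hasDerivAt_const t ((1, 0) : ℝ × ℝ))
    simp only [map_zero, add_zero] at h
    exact h.congr_of_eventuallyEq (hUt.mono fun τ hτ => hs_eq r τ hτ)
  have hGr (w : ℝ × ℝ) : HasDerivAt (fun x => fderiv ℝ L (x, t) w)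
      (fderiv ℝ (fderiv ℝ L) (r, t) (1, 0) w) r := by
    simpa using (hasDerivAt_slice_fst hL2).clm_apply (hasDerivAt_const r w)
  have hr : HasDerivAt (fun x => deriv (fun y => Real.log (p (y, t))) x)
      (fderiv ℝ (fderiv ℝ L) (r, t) (1, 0) (1, 0)) r :=
    (hGr (1, 0)).congr_of_eventuallyEq (hUr.mono fun x hx => hs_eq x t hx)
  -- The `ρ̂`-derivative of the transport equation, which holds on a neighbourhood of `r`.
  have hD := ((hGr (0, 1)).add ((hv_diff _ hrt).hasDerivAt.mul (hGr (1, 0)))).add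
    (hv_diff2 _ hrt).hasDerivAt
  have hzero := hD.unique ((hasDerivAt_const r (0 : ℝ)).congr_of_eventuallyEq
    (hUr.mono fun x hx => htransport x hx))
  rw [ht.deriv, hr.deriv]
  simp only [hs_eq r t hrt]
  rw [hsymm]
  linarith
end

section
/- Let 0 < ρc < ρmax, let f : ℝ → ℝ be C¹ on (0, ρmax) with f'(ρ) > 0 for all ρ ∈ (0, ρc) and f'(ρ) < 0 for all ρ ∈ (ρc, ρmax), and let p : ℝ → ℝ be nonnegative, continuous and integrable on (0, ρmax). Let r₁ : ℝ → ℝ satisfy r₁(y) ∈ (0, ρc) and f(r₁(y)) = y for every y in f((0, ρc)), and let r₂ : ℝ → ℝ satisfy r₂(y) ∈ (ρc, ρmax) and f(r₂(y)) = y for every y in f((ρc, ρmax)). Then for every bounded continuous g : ℝ → ℝ, ∫_0^{ρmax} g(f(ρ))·p(ρ) dρ = ∫_ℝ g(y)·q(y) dy, where q(y) = [indicator of f((0, ρc)) at y]·p(r₁(y))/|f'(r₁(y))| + [indicator of f((ρc, ρmax)) at y]·p(r₂(y))/|f'(r₂(y))|. -/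
open Real Set MeasureTheory intervalIntegral

/-!
On each open branch `f` has nonvanishing derivative of constant sign, so it is differentiable and
injective there, and the one-dimensional change of variables formula applies on the branch: the
Jacobian `|f'|` cancels the denominator of the corresponding term of `q`. This is
`branch_change_of_variables`. The critical density is a null set, so adding the two branches
gives the theorem; splitting the integral on the flow side uses that each term is integrable,
which comes from the integrability of `p` and the boundedness of `g`.
-/

/-- Change of variables on a single branch `s`, with `r` the inverse of `f` on `s`. Besides the
equality of integrals it yields integrability on the flow side. -/
lemma branch_change_of_variables {s : Set ℝ} (hs : MeasurableSet s) {f p r g : ℝ → ℝ}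
    (hd : ∀ x ∈ s, deriv f x ≠ 0) (hinj : InjOn f s)
    (hr : ∀ y ∈ f '' s, r y ∈ s ∧ f (r y) = y)
    (hint : IntegrableOn (fun x => g (f x) * p x) s) :
    Integrable (fun y => g y * (f '' s).indicator (fun y' => p (r y') / |deriv f (r y')|) y) ∧
      ∫ y, g y * (f '' s).indicator (fun y' => p (r y') / |deriv f (r y')|) y
        = ∫ x in s, g (f x) * p x := by
  have hderiv : ∀ x ∈ s, HasDerivWithinAt f (deriv f x) s x := fun x hx =>
    (differentiableAt_of_deriv_ne_zero (hd x hx)).hasDerivAt.hasDerivWithinAt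
  have himage : MeasurableSet (f '' s) :=
    hs.image_of_continuousOn_injOn (fun x hx => (hderiv x hx).continuousWithinAt) hinj
  have hind : (fun y => g y * (f '' s).indicator (fun y' => p (r y') / |deriv f (r y')|) y)
      = (f '' s).indicator (fun y => g y * (p (r y) / |deriv f (r y)|)) := by
    funext y
    by_cases hy : y ∈ f '' s <;> simp only [indicator, hy, if_true, if_false, mul_zero]
  have hcancel : EqOn (fun x => |deriv f x| • (g (f x) * (p (r (f x)) / |deriv f (r (f x))|)))
      (fun x => g (f x) * p x) s := by
    intro x hx
    have hrx := hr (f x) (mem_image_of_mem f hx)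
    have hne : |deriv f x| ≠ 0 := abs_ne_zero.mpr (hd x hx)
    simp only [hinj hrx.1 hx hrx.2, smul_eq_mul]
    field_simp
  rw [hind]
  constructor
  · rw [integrable_indicator_iff himage,
      integrableOn_image_iff_integrableOn_abs_deriv_smul hs hderiv hinj]
    exact hint.congr_fun hcancel.symm hs
  · rw [MeasureTheory.integral_indicator himage,
      integral_image_eq_integral_abs_deriv_smul hs hderiv hinj]
    exact setIntegral_congr_fun hs hcancel

/-- Change of variables for the unimodal fundamental diagram: the pushforward
of the density `p` of the traffic density under the non-injective flux map
`y = f(ρ)` has density `q(y) = Σ_{j: f(ρ_j)=y} p(ρ_j)/|f'(ρ_j)|`, summed over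
the free-flow and congested branch inverses `r₁, r₂`. -/
theorem flow_density_change_of_variables
    (ρc ρmax : ℝ) (hρc : 0 < ρc) (hρmax : ρc < ρmax)
    (f : ℝ → ℝ)
    (hf : ContDiffOn ℝ 1 f (Ioo (0:ℝ) ρmax))
    (hf_inc : ∀ r ∈ Ioo (0:ℝ) ρc, 0 < deriv f r)
    (hf_dec : ∀ r ∈ Ioo ρc ρmax, deriv f r < 0)
    (p : ℝ → ℝ)
    (hp_nonneg : ∀ r ∈ Ioo (0:ℝ) ρmax, 0 ≤ p r)
    (hp_cont : ContinuousOn p (Ioo (0:ℝ) ρmax))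
    (hp_int : IntegrableOn p (Ioo (0:ℝ) ρmax))
    (r₁ r₂ : ℝ → ℝ)
    (hr₁ : ∀ y ∈ f '' Ioo (0:ℝ) ρc, r₁ y ∈ Ioo (0:ℝ) ρc ∧ f (r₁ y) = y)
    (hr₂ : ∀ y ∈ f '' Ioo ρc ρmax, r₂ y ∈ Ioo ρc ρmax ∧ f (r₂ y) = y)
    (q : ℝ → ℝ)
    (hq : q = fun y =>
      (f '' Ioo (0:ℝ) ρc).indicator (fun y' => p (r₁ y') / |deriv f (r₁ y')|) y
      + (f '' Ioo ρc ρmax).indicator (fun y' => p (r₂ y') / |deriv f (r₂ y')|) y) :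
    ∀ g : ℝ → ℝ, Continuous g → (∃ C : ℝ, ∀ y, |g y| ≤ C) →
      ∫ r in (0:ℝ)..ρmax, g (f r) * p r = ∫ y : ℝ, g y * q y := by
  rintro g hg ⟨C, hC⟩
  have hint : IntegrableOn (fun r => g (f r) * p r) (Ioo 0 ρmax) :=
    Integrable.bdd_mul hp_int
      ((hg.comp_continuousOn hf.continuousOn).aestronglyMeasurable measurableSet_Ioo)
      (Filter.Eventually.of_forall fun r => hC (f r))
  have hinj₁ : InjOn f (Ioo 0 ρc) := by
    refine (strictMonoOn_of_deriv_pos (convex_Ioo 0 ρc)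
      (hf.continuousOn.mono (Ioo_subset_Ioo_right hρmax.le)) ?_).injOn
    simpa only [interior_Ioo] using hf_inc
  have hinj₂ : InjOn f (Ioo ρc ρmax) := by
    refine (strictAntiOn_of_deriv_neg (convex_Ioo ρc ρmax)
      (hf.continuousOn.mono (Ioo_subset_Ioo_left hρc.le)) ?_).injOn
    simpa only [interior_Ioo] using hf_dec
  obtain ⟨hi₁, he₁⟩ := branch_change_of_variables (g := g) (p := p) measurableSet_Ioo
    (fun x hx => (hf_inc x hx).ne') hinj₁ hr₁ (hint.mono_set (Ioo_subset_Ioo_right hρmax.le))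
  obtain ⟨hi₂, he₂⟩ := branch_change_of_variables (g := g) (p := p) measurableSet_Ioo
    (fun x hx => (hf_dec x hx).ne) hinj₂ hr₂ (hint.mono_set (Ioo_subset_Ioo_left hρc.le))
  have hIoc : IntegrableOn (fun r => g (f r) * p r) (Ioc 0 ρmax) :=
    hint.congr_set_ae Ioo_ae_eq_Ioc.symm
  have hsplit : ∫ r in (0:ℝ)..ρmax, g (f r) * p r
      = (∫ r in Ioo 0 ρc, g (f r) * p r) + ∫ r in Ioo ρc ρmax, g (f r) * p r := by
    rw [← integral_Ioc_eq_integral_Ioo, ← integral_Ioc_eq_integral_Ioo,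
      ← integral_of_le hρc.le, ← integral_of_le hρmax.le]
    refine (integral_add_adjacent_intervals ?_ ?_).symm
    · exact (intervalIntegrable_iff_integrableOn_Ioc_of_le hρc.le).mpr
        (hIoc.mono_set (Ioc_subset_Ioc_right hρmax.le))
    · exact (intervalIntegrable_iff_integrableOn_Ioc_of_le hρmax.le).mpr
        (hIoc.mono_set (Ioc_subset_Ioc_left hρc.le))
  simp only [hq, mul_add]
  rw [MeasureTheory.integral_add hi₁ hi₂, he₁, he₂, hsplit]
end
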